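/- arXiv:0803.0041 — 2 statements merged into one kernel-verified Lean document; each statement's English description precedes it below -/
import Mathlib

section
/- Let F : X → L(H) be a bounded L(H)-valued norm on a complex normed space X. Then F preserves Cauchy sequences if and only if F is continuous at 0 (with respect to the norm topology of X and the operator-norm topology of L(H)). -/
/-- An `L(H)`-valued norm on a complex normed space `X`: `F x` is a positive operator,
`F` satisfies the triangle inequality in the Loewner order (`S ≤ T` iff `T - S` is positive),
`F` is absolutely homogeneous, and `F x = 0` iff `x = 0`. -/
structure IsOpValuedNorm {X H : Type*} [NormedAddCommGroup X] [NormedSpace ℂ X]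
    [NormedAddCommGroup H] [InnerProductSpace ℂ H] [CompleteSpace H]
    (F : X → H →L[ℂ] H) : Prop where
  isPositive : ∀ x, (F x).IsPositive
  triangle : ∀ x y, (F x + F y - F (x + y)).IsPositive
  smul_eq : ∀ (c : ℂ) (x : X), F (c • x) = ‖c‖ • F x
  eq_zero_iff : ∀ x, F x = 0 ↔ x = 0

/-- If `-S ≤ T ≤ S` in the Loewner order, with `T` symmetric, then `‖T‖ ≤ ‖S‖`. -/
theorem ContinuousLinearMap.norm_le_norm_of_isPositive_sub_of_isPositive_add {H : Type*}
    [NormedAddCommGroup H] [InnerProductSpace ℂ H] {S T : H →L[ℂ] H}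
    (hT : (T : H →ₗ[ℂ] H).IsSymmetric) (hsub : (S - T).IsPositive) (hadd : (S + T).IsPositive) :
    ‖T‖ ≤ ‖S‖ := by
  rw [T.norm_eq_iSup_rayleighQuotient hT]
  refine ciSup_le fun x => le_trans ?_ (S.rayleighQuotient_le_norm x)
  refine le_trans ?_ (le_abs_self _)
  have h₁ := hsub.re_inner_nonneg_left x
  have h₂ := hadd.re_inner_nonneg_left x
  simp only [_root_.sub_apply, _root_.add_apply, inner_sub_left,
    inner_add_left, map_sub, map_add] at h₁ h₂
  simp only [ContinuousLinearMap.rayleighQuotient, ContinuousLinearMap.reApplyInnerSelf_apply,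
    abs_div, abs_sq]
  gcongr
  exact abs_le.2 ⟨by linarith, by linarith⟩

namespace IsOpValuedNorm

variable {X H : Type*} [NormedAddCommGroup X] [NormedSpace ℂ X]
  [NormedAddCommGroup H] [InnerProductSpace ℂ H] [CompleteSpace H] {F : X → H →L[ℂ] H}

theorem map_neg (hF : IsOpValuedNorm F) (x : X) : F (-x) = F x := by
  simpa using hF.smul_eq (-1) x

/-- The reverse triangle inequality. -/
theorem norm_sub_le (hF : IsOpValuedNorm F) (x y : X) : ‖F x - F y‖ ≤ ‖F (x - y)‖ := by
  refine ContinuousLinearMap.norm_le_norm_of_isPositive_sub_of_isPositive_add ?_ ?_ ?_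
  · exact ((hF.isPositive x).isSelfAdjoint.sub (hF.isPositive y).isSelfAdjoint).isSymmetric
  · have h := hF.triangle (x - y) y
    rw [sub_add_cancel] at h
    convert h using 1
    abel
  · have h := hF.triangle (y - x) x
    rw [sub_add_cancel, ← neg_sub x y, hF.map_neg] at h
    convert h using 1
    abel

theorem norm_le_mul_norm (hF : IsOpValuedNorm F) {M : ℝ} (hM : ∀ x : X, ‖x‖ = 1 → ‖F x‖ ≤ M)
    (x : X) : ‖F x‖ ≤ M * ‖x‖ := by
  rcases eq_or_ne x 0 with rfl | hx
  · simp [(hF.eq_zero_iff 0).2 rfl]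
  · have h := hM (((‖x‖⁻¹ : ℝ) : ℂ) • x) (by simp [norm_smul, hx])
    have hpos := norm_pos_iff.2 hx
    rw [hF.smul_eq, norm_smul] at h
    simp only [Complex.norm_real, norm_inv, norm_norm] at h
    rwa [inv_mul_le_iff₀ hpos, mul_comm] at h

/-- A bounded `L(H)`-valued norm is Lipschitz. -/
theorem lipschitzWith (hF : IsOpValuedNorm F) {M : ℝ} (hM : ∀ x : X, ‖x‖ = 1 → ‖F x‖ ≤ M) :
    LipschitzWith M.toNNReal F := by
  refine LipschitzWith.of_dist_le' fun x y => ?_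
  rw [dist_eq_norm, dist_eq_norm]
  exact (hF.norm_sub_le x y).trans (hF.norm_le_mul_norm hM _)

end IsOpValuedNorm

/-- A bounded `L(H)`-valued norm `F` on a complex normed space `X` preserves Cauchy
sequences if and only if it is continuous at `0`. -/
theorem opValuedNorm_preserves_cauchy_iff_continuousAt_zero {X H : Type*} [NormedAddCommGroup X] [NormedSpace ℂ X]
    [NormedAddCommGroup H] [InnerProductSpace ℂ H] [CompleteSpace H] [Nontrivial H]
    (F : X → H →L[ℂ] H) (hF : IsOpValuedNorm F)
    (hbdd : ∃ M : ℝ, ∀ x : X, ‖x‖ = 1 → ‖F x‖ ≤ M) :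
    (∀ u : ℕ → X, CauchySeq u → CauchySeq (fun n => F (u n))) ↔ ContinuousAt F 0 := by
  obtain ⟨M, hM⟩ := hbdd
  have hL := hF.lipschitzWith hM
  exact ⟨fun _ => hL.continuous.continuousAt, fun _ _ hu => hL.uniformContinuous.comp_cauchySeq hu⟩
end

section
/- Let φ : X × X → L(H) be an L(H)-valued inner product on a complex vector space X such that F_φ(x) = φ(x,x)^{1/2} defines an L(H)-valued norm on X (triangle inequality in the Loewner order and absolute homogeneity hold for F_φ), and suppose φ is bounded with constant M > 0, i.e., ‖φ(x,y)‖ ≤ M·‖F_φ(x)‖·‖F_φ(y)‖ for all x, y. If sequences (x_n) and (y_n) in X converge to x and y respectively with respect to F_φ (i.e., for every ε > 0, eventually F_φ(x_n − x) ≤ ε·I_H and F_φ(y_n − y) ≤ ε·I_H in the Loewner order), then ‖φ(x_n, y_n) − φ(x, y)‖ → 0 in the operator norm. -/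
/-- A positive operator dominated by `ε • 1` in the Loewner order has norm at most `ε`. -/
theorem ContinuousLinearMap.IsPositive.norm_le_of_sub_isPositive
    {H : Type*} [NormedAddCommGroup H] [InnerProductSpace ℂ H] [CompleteSpace H] [Nontrivial H]
    {T : H →L[ℂ] H} (hT : T.IsPositive) {ε : ℝ} (hε : 0 ≤ ε)
    (h : (ε • (1 : H →L[ℂ] H) - T).IsPositive) : ‖T‖ ≤ ε := by
  have hT' : 0 ≤ T := (ContinuousLinearMap.nonneg_iff_isPositive T).2 hT
  have hle : T ≤ ε • (1 : H →L[ℂ] H) := (ContinuousLinearMap.le_def _ _).2 h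
  simpa [norm_smul, abs_of_nonneg hε] using CStarAlgebra.norm_le_norm_of_nonneg_of_le hT' hle

/-- Convergence to `0` in the Loewner order of positive operators implies norm convergence. -/
theorem ContinuousLinearMap.tendsto_norm_zero_of_sub_isPositive
    {H : Type*} [NormedAddCommGroup H] [InnerProductSpace ℂ H] [CompleteSpace H] [Nontrivial H]
    {T : ℕ → H →L[ℂ] H} (hT : ∀ n, (T n).IsPositive)
    (h : ∀ ε : ℝ, 0 < ε → ∃ N : ℕ, ∀ n ≥ N, (ε • (1 : H →L[ℂ] H) - T n).IsPositive) :
    Filter.Tendsto (fun n => ‖T n‖) Filter.atTop (nhds 0) := by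
  rw [Metric.tendsto_atTop]
  intro ε hε
  obtain ⟨N, hN⟩ := h (ε / 2) (half_pos hε)
  refine ⟨N, fun n hn => ?_⟩
  have := (hT n).norm_le_of_sub_isPositive (half_pos hε).le (hN n hn)
  rw [Real.dist_eq, sub_zero, abs_norm]
  linarith

/-- Let `φ : X × X → L(H)` be an `L(H)`-valued inner product on a complex vector space `X`
such that the positive square root `Fφ x` of `φ x x` defines an `L(H)`-valued norm on `X`
(triangle inequality in the Loewner order and absolute homogeneity), and suppose `φ` is
bounded with constant `M > 0`.  If `(xₙ)` and `(yₙ)` converge to `x` and `y` respectively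
with respect to `Fφ` (Loewner-order formulation), then `‖φ xₙ yₙ - φ x y‖ → 0`. -/
theorem bounded_opValuedInner_continuous
    {X H : Type*} [AddCommGroup X] [Module ℂ X]
    [NormedAddCommGroup H] [InnerProductSpace ℂ H] [CompleteSpace H] [Nontrivial H]
    (φ : X → X → H →L[ℂ] H)
    (hadd₁ : ∀ x y z, φ (x + y) z = φ x z + φ y z)
    (hsmul₁ : ∀ (c : ℂ) (x y : X), φ (c • x) y = c • φ x y)
    (hadd₂ : ∀ x y z, φ x (y + z) = φ x y + φ x z)
    (hsmul₂ : ∀ (c : ℂ) (x y : X), φ x (c • y) = (starRingEnd ℂ c) • φ x y)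
    (hpos : ∀ x, (φ x x).IsPositive)
    (hdef : ∀ x, φ x x = 0 ↔ x = 0)
    (hadj : ∀ x y, φ x y = ContinuousLinearMap.adjoint (φ y x))
    (Fφ : X → H →L[ℂ] H)
    (hsqrt : ∀ x, (Fφ x).IsPositive ∧ Fφ x * Fφ x = φ x x)
    (htriangle : ∀ x y, (Fφ x + Fφ y - Fφ (x + y)).IsPositive)
    (hhomog : ∀ (c : ℂ) (x : X), Fφ (c • x) = ‖c‖ • Fφ x)
    (M : ℝ) (hM : 0 < M)
    (hbound : ∀ x y, ‖φ x y‖ ≤ M * ‖Fφ x‖ * ‖Fφ y‖)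
    (x y : X) (xs ys : ℕ → X)
    (hx : ∀ ε : ℝ, 0 < ε → ∃ N : ℕ, ∀ n ≥ N,
      (ε • (1 : H →L[ℂ] H) - Fφ (xs n - x)).IsPositive)
    (hy : ∀ ε : ℝ, 0 < ε → ∃ N : ℕ, ∀ n ≥ N,
      (ε • (1 : H →L[ℂ] H) - Fφ (ys n - y)).IsPositive) :
    Filter.Tendsto (fun n => ‖φ (xs n) (ys n) - φ x y‖) Filter.atTop (nhds 0) := by
  have hu := ContinuousLinearMap.tendsto_norm_zero_of_sub_isPositive
    (fun n => (hsqrt (xs n - x)).1) hx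
  have hv := ContinuousLinearMap.tendsto_norm_zero_of_sub_isPositive
    (fun n => (hsqrt (ys n - y)).1) hy
  have hlim : Filter.Tendsto
      (fun n => M * ‖Fφ (xs n - x)‖ * ‖Fφ (ys n - y)‖ + M * ‖Fφ (xs n - x)‖ * ‖Fφ y‖
        + M * ‖Fφ x‖ * ‖Fφ (ys n - y)‖) Filter.atTop (nhds 0) := by
    simpa using (((hu.const_mul M).mul hv).add ((hu.const_mul M).mul_const ‖Fφ y‖)).add
      (hv.const_mul (M * ‖Fφ x‖))
  refine squeeze_zero (fun n => norm_nonneg _) (fun n => ?_) hlim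
  have hsplit : φ (xs n) (ys n) - φ x y
      = φ (xs n - x) (ys n - y) + φ (xs n - x) y + φ x (ys n - y) := by
    have h₁ := hadd₁ (xs n - x) x (ys n)
    have h₂ := hadd₂ (xs n - x) (ys n - y) y
    have h₃ := hadd₂ x (ys n - y) y
    rw [sub_add_cancel] at h₁ h₂ h₃
    rw [h₁, h₂, h₃]
    abel
  rw [hsplit]
  exact norm_add₃_le.trans (add_le_add_three (hbound _ _) (hbound _ _) (hbound _ _))
end
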